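/- arXiv:1709.00658 — 2 statements merged into one kernel-verified Lean document; each statement's English description precedes it below -/
import Mathlib

section
/- Let B be a class of right R-modules such that GF_B(R) is closed under extensions, hence (GF_B(R), GC_B(R)) and (F(R), C(R)) are complete hereditary cotorsion pairs with F(R) ⊆ GF_B(R), GC_B(R) ⊆ C(R), and GF_B(R) ∩ GC_B(R) = F(R) ∩ C(R). Then there exists a unique thick class W of left R-modules such that GF_B(R) ∩ W = F(R) and C(R) ∩ W = GC_B(R) (Gillespie's two-cotorsion-pair theorem applied to this situation). -/
open LinearMap

/-- A witness complex for Gorenstein `B`-flatness: an exact complex of flat modules which stays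
exact after applying `N ⊗_R -` for every `N` in the class `B`. The complex is encoded as a family
`F : ℤ → ModuleCat R` with differentials `d n : F (n+1) → F n`. -/
def IsGBFlatComplex (R : Type) [CommRing R] (B : ModuleCat R → Prop)
    (F : ℤ → ModuleCat R) (d : ∀ n : ℤ, F (n + 1) →ₗ[R] F n) : Prop :=
  (∀ n : ℤ, Module.Flat R (F n)) ∧
  (∀ n : ℤ, d n ∘ₗ d (n + 1) = 0) ∧
  (∀ n : ℤ, Function.Exact (d (n + 1)) (d n)) ∧
  (∀ N : ModuleCat R, B N → ∀ n : ℤ,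
    Function.Exact (lTensor N (d (n + 1))) (lTensor N (d n)))

/-- `M` is Gorenstein `B`-flat if it is the zeroth cycle module `Z₀ = ker (F₀ → F₋₁)` of an
exact, `(B ⊗_R -)`-acyclic complex of flat modules. -/
def GorensteinBFlat (R : Type) [CommRing R] (B : ModuleCat R → Prop) (M : ModuleCat R) : Prop :=
  ∃ (F : ℤ → ModuleCat.{0} R) (d : ∀ n : ℤ, F (n + 1) →ₗ[R] F n),
    IsGBFlatComplex R B F d ∧ Nonempty (M ≃ₗ[R] LinearMap.ker (d (-1)))

/-- `Ext¹_R(M, N) = 0`, expressed elementarily: every short exact sequence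
`0 → N → E → M → 0` of `R`-modules splits. -/
def Ext1Vanishes (R : Type) [CommRing R] (M N : ModuleCat.{0} R) : Prop :=
  ∀ (E : ModuleCat.{0} R) (i : N →ₗ[R] E) (p : E →ₗ[R] M),
    Function.Injective i → Function.Exact i p → Function.Surjective p →
    ∃ s : M →ₗ[R] E, p ∘ₗ s = LinearMap.id

/-- The class of cotorsion modules: `C(R) = F(R)^⊥`. -/
def Cotorsion (R : Type) [CommRing R] (M : ModuleCat.{0} R) : Prop :=
  ∀ F : ModuleCat.{0} R, Module.Flat R F → Ext1Vanishes R F M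

/-- The class of Gorenstein `B`-cotorsion modules: `GC_B(R) = GF_B(R)^⊥`. -/
def GBCotorsion (R : Type) [CommRing R] (B : ModuleCat R → Prop) (M : ModuleCat.{0} R) : Prop :=
  ∀ G : ModuleCat.{0} R, GorensteinBFlat R B G → Ext1Vanishes R G M

/-- A class `W` of modules is thick if it is closed under direct summands (retracts),
extensions, kernels of epimorphisms and cokernels of monomorphisms between its members. -/
def IsThickClass (R : Type) [CommRing R] (W : ModuleCat.{0} R → Prop) : Prop :=
  (∀ (X Y : ModuleCat.{0} R) (i : X →ₗ[R] Y) (r : Y →ₗ[R] X),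
      r ∘ₗ i = LinearMap.id → W Y → W X) ∧
  (∀ (X Y Z : ModuleCat.{0} R) (i : X →ₗ[R] Y) (p : Y →ₗ[R] Z),
      Function.Injective i → Function.Exact i p → Function.Surjective p →
      W X → W Z → W Y) ∧
  (∀ (X Y Z : ModuleCat.{0} R) (i : X →ₗ[R] Y) (p : Y →ₗ[R] Z),
      Function.Injective i → Function.Exact i p → Function.Surjective p →
      W Y → W Z → W X) ∧
  (∀ (X Y Z : ModuleCat.{0} R) (i : X →ₗ[R] Y) (p : Y →ₗ[R] Z),
      Function.Injective i → Function.Exact i p → Function.Surjective p →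
      W X → W Y → W Z)

namespace HT

variable {R : Type} [CommRing R]

structure SES {X Y Z : ModuleCat.{0} R} (i : X →ₗ[R] Y) (p : Y →ₗ[R] Z) : Prop where
  inj : Function.Injective i
  ex : Function.Exact i p
  surj : Function.Surjective p

theorem SES.z {X Y Z : ModuleCat.{0} R} {i : X →ₗ[R] Y} {p : Y →ₗ[R] Z} (h : SES i p) (x : X) :
    p (i x) = 0 := h.ex.apply_apply_eq_zero x

structure IsPO {X Y N E : ModuleCat.{0} R} (i : X →ₗ[R] Y) (j : X →ₗ[R] N)
    (a : Y →ₗ[R] E) (b : N →ₗ[R] E) : Prop where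
  comm : ∀ x, a (i x) = b (j x)
  eq : ∀ y n, a y = b n → ∃ x, y = i x ∧ n = j x
  gen : ∀ e, ∃ y n, e = a y + b n
  desc : ∀ (T : ModuleCat.{0} R) (f : Y →ₗ[R] T) (g : N →ₗ[R] T), (∀ x, f (i x) = g (j x)) →
    ∃ h : E →ₗ[R] T, (∀ y, h (a y) = f y) ∧ ∀ n, h (b n) = g n

theorem IsPO.symm {X Y N E : ModuleCat.{0} R} {i : X →ₗ[R] Y} {j : X →ₗ[R] N}
    {a : Y →ₗ[R] E} {b : N →ₗ[R] E} (h : IsPO i j a b) : IsPO j i b a where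
  comm x := (h.comm x).symm
  eq y n e := by obtain ⟨x, h1, h2⟩ := h.eq n y e.symm; exact ⟨x, h2, h1⟩
  gen e := by obtain ⟨y, n, rfl⟩ := h.gen e; exact ⟨n, y, add_comm _ _⟩
  desc T f g e := by
    obtain ⟨k, h1, h2⟩ := h.desc T g f (fun x => (e x).symm); exact ⟨k, h2, h1⟩

theorem exists_PO {X Y N : ModuleCat.{0} R} (i : X →ₗ[R] Y) (j : X →ₗ[R] N) :
    ∃ (E : ModuleCat.{0} R) (a : Y →ₗ[R] E) (b : N →ₗ[R] E), IsPO i j a b := by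
  let S : Submodule R (Y × N) := LinearMap.range (i.prod (-j))
  refine ⟨ModuleCat.of R ((Y × N) ⧸ S), S.mkQ ∘ₗ LinearMap.inl R Y N,
    S.mkQ ∘ₗ LinearMap.inr R Y N, ?_, ?_, ?_, ?_⟩
  · intro x
    change S.mkQ (i x, 0) = S.mkQ (0, j x)
    rw [← sub_eq_zero, ← map_sub]
    exact (Submodule.Quotient.mk_eq_zero S).2 ⟨x, by simp⟩
  · intro y n e
    change S.mkQ (y, 0) = S.mkQ (0, n) at e
    rw [← sub_eq_zero, ← map_sub] at e
    obtain ⟨x, hx⟩ := (Submodule.Quotient.mk_eq_zero S).1 e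
    simp at hx
    exact ⟨x, hx.1.symm, hx.2.symm⟩
  · intro e
    obtain ⟨⟨y, n⟩, rfl⟩ := S.mkQ_surjective e
    refine ⟨y, n, ?_⟩
    change _ = S.mkQ (y, 0) + S.mkQ (0, n)
    rw [← map_add]; simp
  · intro T f g e
    refine ⟨S.liftQ (f.coprod g) ?_, ?_, ?_⟩
    · rintro _ ⟨x, rfl⟩
      simp [e x]
    · intro y
      change (S.liftQ (f.coprod g) _) (S.mkQ (y, 0)) = _
      simp
    · intro n
      change (S.liftQ (f.coprod g) _) (S.mkQ (0, n)) = _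
      simp

theorem IsPO.ses {X Y N E Z : ModuleCat.{0} R} {i : X →ₗ[R] Y} {j : X →ₗ[R] N}
    {a : Y →ₗ[R] E} {b : N →ₗ[R] E} (h : IsPO i j a b) {p : Y →ₗ[R] Z} (hp : SES i p) :
    ∃ q : E →ₗ[R] Z, SES b q ∧ ∀ y, q (a y) = p y := by
  obtain ⟨q, h1, h2⟩ := h.desc Z p 0 (fun x => by simp [hp.z])
  refine ⟨q, ⟨?_, ?_, ?_⟩, h1⟩
  · rw [injective_iff_map_eq_zero]
    intro n hn
    obtain ⟨x, e1, e2⟩ := h.eq 0 n (by rw [hn, map_zero])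
    have : x = 0 := hp.inj (by rw [← e1, map_zero])
    rw [e2, this, map_zero]
  · intro e
    constructor
    · intro he
      obtain ⟨y, n, rfl⟩ := h.gen e
      rw [map_add, h1, h2] at he
      obtain ⟨x, rfl⟩ := (hp.ex y).1 (by simpa using he)
      exact ⟨j x + n, by rw [map_add, h.comm]⟩
    · rintro ⟨n, rfl⟩
      rw [h2]; rfl
  · intro z
    obtain ⟨y, rfl⟩ := hp.surj z
    exact ⟨a y, h1 y⟩

structure IsPB {Y A Z E : ModuleCat.{0} R} (p : Y →ₗ[R] Z) (q : A →ₗ[R] Z)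
    (u : E →ₗ[R] Y) (v : E →ₗ[R] A) : Prop where
  comm : ∀ e, p (u e) = q (v e)
  ex : ∀ y a, p y = q a → ∃ e, u e = y ∧ v e = a
  uniq : ∀ e, u e = 0 → v e = 0 → e = 0
  lift : ∀ (T : ModuleCat.{0} R) (f : T →ₗ[R] Y) (g : T →ₗ[R] A), (∀ t, p (f t) = q (g t)) →
    ∃ h : T →ₗ[R] E, (∀ t, u (h t) = f t) ∧ ∀ t, v (h t) = g t

theorem IsPB.symm {Y A Z E : ModuleCat.{0} R} {p : Y →ₗ[R] Z} {q : A →ₗ[R] Z}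
    {u : E →ₗ[R] Y} {v : E →ₗ[R] A} (h : IsPB p q u v) : IsPB q p v u where
  comm x := (h.comm x).symm
  ex y n e := by obtain ⟨x, h1, h2⟩ := h.ex n y e.symm; exact ⟨x, h2, h1⟩
  uniq e h1 h2 := h.uniq e h2 h1
  lift T f g e := by
    obtain ⟨k, h1, h2⟩ := h.lift T g f (fun x => (e x).symm); exact ⟨k, h2, h1⟩

theorem exists_PB {Y A Z : ModuleCat.{0} R} (p : Y →ₗ[R] Z) (q : A →ₗ[R] Z) :
    ∃ (E : ModuleCat.{0} R) (u : E →ₗ[R] Y) (v : E →ₗ[R] A), IsPB p q u v := by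
  let S : Submodule R (Y × A) := LinearMap.ker (p.coprod (-q))
  have hS : ∀ w : Y × A, w ∈ S ↔ p w.1 = q w.2 := by
    intro w
    simp only [S, LinearMap.mem_ker, LinearMap.coprod_apply, LinearMap.neg_apply]
    rw [← sub_eq_add_neg, sub_eq_zero]
  refine ⟨ModuleCat.of R S, LinearMap.fst R Y A ∘ₗ S.subtype, LinearMap.snd R Y A ∘ₗ S.subtype,
    ?_, ?_, ?_, ?_⟩
  · intro e
    exact (hS _).1 e.2
  · intro y a e
    exact ⟨⟨(y, a), (hS _).2 e⟩, rfl, rfl⟩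
  · intro e h1 h2
    exact Subtype.ext (Prod.ext h1 h2)
  · intro T f g e
    exact ⟨(f.prod g).codRestrict S (fun t => (hS _).2 (e t)), fun t => rfl, fun t => rfl⟩

theorem IsPB.ses {X Y A Z E : ModuleCat.{0} R} {p : Y →ₗ[R] Z} {q : A →ₗ[R] Z}
    {u : E →ₗ[R] Y} {v : E →ₗ[R] A} (h : IsPB p q u v) {i : X →ₗ[R] Y} (hp : SES i p) :
    ∃ k : X →ₗ[R] E, SES k v ∧ ∀ x, u (k x) = i x := by
  obtain ⟨k, h1, h2⟩ := h.lift X i 0 (fun x => by simp [hp.z])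
  refine ⟨k, ⟨?_, ?_, ?_⟩, h1⟩
  · intro x x' hx
    apply hp.inj
    rw [← h1, ← h1, hx]
  · intro e
    constructor
    · intro he
      obtain ⟨x, hx⟩ := (hp.ex (u e)).1 (by rw [h.comm, he, map_zero])
      refine ⟨x, ?_⟩
      rw [← sub_eq_zero]
      apply h.uniq
      · rw [map_sub, h1, hx, sub_self]
      · rw [map_sub, h2, he]; simp
    · rintro ⟨x, rfl⟩
      rw [h2]; rfl
  · intro a
    obtain ⟨y, hy⟩ := hp.surj (q a)
    obtain ⟨e, -, he⟩ := h.ex y a hy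
    exact ⟨e, he⟩

theorem comp_mono {X Y A N F : ModuleCat.{0} R} {a : X →ₗ[R] Y} {p : Y →ₗ[R] A}
    {b : Y →ₗ[R] N} {q : N →ₗ[R] F} (h1 : SES a p) (h2 : SES b q) :
    ∃ (C : ModuleCat.{0} R) (r : N →ₗ[R] C) (s : A →ₗ[R] C) (t : C →ₗ[R] F),
      SES (b ∘ₗ a) r ∧ SES s t := by
  obtain ⟨C, r, s, h⟩ := exists_PO b p
  obtain ⟨t, ht, -⟩ := h.ses h2
  refine ⟨C, r, s, t, ⟨?_, ?_, ?_⟩, ht⟩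
  · exact h2.inj.comp h1.inj
  · intro n
    constructor
    · intro hn
      obtain ⟨y, e1, e2⟩ := h.eq n 0 (by rw [hn, map_zero])
      obtain ⟨x, rfl⟩ := (h1.ex y).1 e2.symm
      exact ⟨x, e1.symm⟩
    · rintro ⟨x, rfl⟩
      change r (b (a x)) = 0
      rw [h.comm, h1.z, map_zero]
  · intro c
    obtain ⟨n, α, rfl⟩ := h.gen c
    obtain ⟨y, rfl⟩ := h1.surj α
    exact ⟨n + b y, by rw [map_add, h.comm]⟩

theorem comp_epi {K A Y N Z : ModuleCat.{0} R} {k : K →ₗ[R] A} {g : A →ₗ[R] Y}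
    {i : N →ₗ[R] Y} {p : Y →ₗ[R] Z} (h1 : SES k g) (h2 : SES i p) :
    ∃ (P : ModuleCat.{0} R) (s : K →ₗ[R] P) (t : P →ₗ[R] N) (r : P →ₗ[R] A),
      SES s t ∧ SES r (p ∘ₗ g) := by
  obtain ⟨P, r, t, h⟩ := exists_PB g i
  obtain ⟨s, hs, -⟩ := h.ses h1
  refine ⟨P, s, t, r, hs, ⟨?_, ?_, ?_⟩⟩
  · rw [injective_iff_map_eq_zero]
    intro e he
    refine h.uniq e he (h2.inj ?_)
    rw [← h.comm, he, map_zero, map_zero]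
  · intro a
    constructor
    · intro ha
      obtain ⟨n, hn⟩ := (h2.ex (g a)).1 ha
      obtain ⟨e, he, -⟩ := h.ex a n hn.symm
      exact ⟨e, he⟩
    · rintro ⟨e, rfl⟩
      change p (g (r e)) = 0
      rw [h.comm, h2.z]
  · exact h2.surj.comp h1.surj

def Perp (P : ModuleCat.{0} R → Prop) (M : ModuleCat.{0} R) : Prop :=
  ∀ F : ModuleCat.{0} R, P F → Ext1Vanishes R F M

theorem Ext1.extend {M N K P : ModuleCat.{0} R} (h : Ext1Vanishes R M N)
    {k : K →ₗ[R] P} {q : P →ₗ[R] M} (hs : SES k q) (f : K →ₗ[R] N) :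
    ∃ g : P →ₗ[R] N, ∀ x, g (k x) = f x := by
  obtain ⟨E, a, b, hE⟩ := exists_PO k f
  obtain ⟨t, ht, hta⟩ := hE.ses hs
  obtain ⟨s, hs'⟩ := h E b t ht.inj ht.ex ht.surj
  have hts : ∀ m, t (s m) = m := fun m => congrArg (fun f => f m) hs'
  have key : ∀ y : P, a y - s (q y) ∈ LinearMap.range b := by
    intro y
    exact (ht.ex _).1 (by rw [map_sub, hta, hts, sub_self])
  let e := LinearEquiv.ofInjective b ht.inj
  refine ⟨e.symm.toLinearMap ∘ₗ ((a - s ∘ₗ q).codRestrict (LinearMap.range b) key), ?_⟩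
  intro x
  change e.symm _ = _
  rw [LinearEquiv.symm_apply_eq]
  apply Subtype.ext
  change a (k x) - s (q (k x)) = b (f x)
  rw [hs.z, map_zero, sub_zero, hE.comm]

theorem Ext1.lift {K X Y Z : ModuleCat.{0} R} (h : Ext1Vanishes R K X)
    {i : X →ₗ[R] Y} {p : Y →ₗ[R] Z} (hs : SES i p) (f : K →ₗ[R] Z) :
    ∃ g : K →ₗ[R] Y, ∀ x, p (g x) = f x := by
  obtain ⟨E, u, v, hE⟩ := exists_PB p f
  obtain ⟨k, hk, -⟩ := hE.ses hs
  obtain ⟨s, hs'⟩ := h E k v hk.inj hk.ex hk.surj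
  have hts : ∀ m, v (s m) = m := fun m => congrArg (fun f => f m) hs'
  exact ⟨u ∘ₗ s, fun x => by rw [LinearMap.comp_apply, hE.comm, hts]⟩

theorem exists_proj (M : ModuleCat.{0} R) : ∃ (K P : ModuleCat.{0} R) (k : K →ₗ[R] P)
    (q : P →ₗ[R] M), SES k q ∧ Module.Free R P := by
  let π : (M →₀ R) →ₗ[R] M := Finsupp.linearCombination R fun a : M ↦ a
  have hπ : Function.Surjective π := Finsupp.linearCombination_surjective _ Function.surjective_id
  exact ⟨ModuleCat.of R (LinearMap.ker π), ModuleCat.of R (M →₀ R), (LinearMap.ker π).subtype, π,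
    ⟨Subtype.val_injective, LinearMap.exact_subtype_ker_map π, hπ⟩,
    inferInstanceAs (Module.Free R (M →₀ R))⟩

theorem Ext1.of_extend {M N K P : ModuleCat.{0} R} {k : K →ₗ[R] P} {q : P →ₗ[R] M}
    (hs : SES k q) [Module.Free R P]
    (h : ∀ f : K →ₗ[R] N, ∃ g : P →ₗ[R] N, ∀ x, g (k x) = f x) : Ext1Vanishes R M N := by
  intro E i p h1 h2 h3
  obtain ⟨l, hl⟩ := Module.projective_lifting_property p q h3
  have hl' : ∀ x, p (l x) = q x := fun m => congrArg (fun f => f m) hl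
  have key : ∀ x : K, l (k x) ∈ LinearMap.range i := by
    intro x
    exact (h2 _).1 (by rw [hl', hs.z])
  let e := LinearEquiv.ofInjective i h1
  obtain ⟨g, hg⟩ := h (e.symm.toLinearMap ∘ₗ ((l ∘ₗ k).codRestrict (LinearMap.range i) key))
  have hg' : ∀ x, i (g (k x)) = l (k x) := by
    intro x
    rw [hg]
    change (e (e.symm _)).1 = _
    rw [LinearEquiv.apply_symm_apply]
    rfl
  have hle : LinearMap.ker q ≤ LinearMap.ker (l - i ∘ₗ g) := by
    intro y hy
    obtain ⟨x, rfl⟩ := (hs.ex y).1 hy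
    simp [hg']
  let e2 := q.quotKerEquivOfSurjective hs.surj
  refine ⟨(LinearMap.ker q).liftQ (l - i ∘ₗ g) hle ∘ₗ e2.symm.toLinearMap, ?_⟩
  ext m
  obtain ⟨y, rfl⟩ := hs.surj m
  have : e2.symm (q y) = (LinearMap.ker q).mkQ y := by
    rw [LinearEquiv.symm_apply_eq]; rfl
  simp only [LinearMap.comp_apply, LinearEquiv.coe_coe, this]
  simp [hl', h2.apply_apply_eq_zero]

theorem Perp.ext {P : ModuleCat.{0} R → Prop} {X Y Z : ModuleCat.{0} R} {i : X →ₗ[R] Y}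
    {p : Y →ₗ[R] Z} (hs : SES i p) (hX : Perp P X) (hZ : Perp P Z) : Perp P Y := by
  intro F hF
  obtain ⟨K, Q, k, q, hk, hfree⟩ := exists_proj F
  refine Ext1.of_extend hk (fun f => ?_)
  obtain ⟨g, hg⟩ := Ext1.extend (hZ F hF) hk (p ∘ₗ f)
  obtain ⟨l, hl⟩ := Module.projective_lifting_property p g hs.surj
  have hl' : ∀ x, p (l x) = g x := fun m => congrArg (fun f => f m) hl
  have key : ∀ x : K, (f - l ∘ₗ k) x ∈ LinearMap.range i := by
    intro x
    refine (hs.ex _).1 ?_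
    simp [hl', hg]
  let e := LinearEquiv.ofInjective i hs.inj
  obtain ⟨m, hm⟩ := Ext1.extend (hX F hF) hk
    (e.symm.toLinearMap ∘ₗ ((f - l ∘ₗ k).codRestrict (LinearMap.range i) key))
  have hm' : ∀ x, i (m (k x)) = f x - l (k x) := by
    intro x
    rw [hm]
    change (e (e.symm _)).1 = _
    rw [LinearEquiv.apply_symm_apply]
    rfl
  exact ⟨l + i ∘ₗ m, fun x => by simp [hm']⟩

theorem Perp.cok {P : ModuleCat.{0} R → Prop} (hfr : ∀ M : ModuleCat.{0} R, Module.Free R M → P M)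
    (hher : ∀ {X Y Z : ModuleCat.{0} R} {i : X →ₗ[R] Y} {p : Y →ₗ[R] Z}, SES i p →
      P Y → P Z → P X)
    {X Y Z : ModuleCat.{0} R} {i : X →ₗ[R] Y}
    {p : Y →ₗ[R] Z} (hs : SES i p) (hX : Perp P X) (hY : Perp P Y) : Perp P Z := by
  intro F hF
  obtain ⟨K, Q, k, q, hk, hfree⟩ := exists_proj F
  refine Ext1.of_extend hk (fun f => ?_)
  obtain ⟨g, hg⟩ := Ext1.lift (hX K (hher hk (hfr Q hfree) hF)) hs f
  obtain ⟨m, hm⟩ := Ext1.extend (hY F hF) hk g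
  exact ⟨p ∘ₗ m, fun x => by simp [hm, hg]⟩

theorem Perp.retract {P : ModuleCat.{0} R → Prop} {X Y : ModuleCat.{0} R} (i : X →ₗ[R] Y)
    (r : Y →ₗ[R] X) (h : ∀ x, r (i x) = x) (hY : Perp P Y) : Perp P X := by
  intro F hF
  obtain ⟨K, Q, k, q, hk, hfree⟩ := exists_proj F
  refine Ext1.of_extend hk (fun f => ?_)
  obtain ⟨m, hm⟩ := Ext1.extend (hY F hF) hk (i ∘ₗ f)
  exact ⟨r ∘ₗ m, fun x => by simp [hm, h]⟩

theorem Perp.zero {P : ModuleCat.{0} R → Prop} : Perp P (ModuleCat.of R PUnit) := by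
  intro F hF
  obtain ⟨K, Q, k, q, hk, hfree⟩ := exists_proj F
  exact Ext1.of_extend hk (fun f => ⟨0, fun x => rfl⟩)

theorem ses_zero_left (M : ModuleCat.{0} R) :
    SES (X := ModuleCat.of R PUnit) (Y := M) (Z := M) 0 LinearMap.id := by
  refine ⟨fun _ _ _ => rfl, fun y => ⟨fun h => ⟨0, ?_⟩, ?_⟩, fun y => ⟨y, rfl⟩⟩
  · rw [map_zero]; exact h.symm
  · rintro ⟨x, rfl⟩; rfl

theorem ses_zero_right (M : ModuleCat.{0} R) :
    SES (X := M) (Y := M) (Z := ModuleCat.of R PUnit) LinearMap.id 0 :=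
  ⟨fun _ _ h => h, fun y => ⟨fun _ => ⟨y, rfl⟩, fun _ => rfl⟩, fun _ => ⟨0, rfl⟩⟩

theorem flat_ker {X Y Z : ModuleCat.{0} R} {i : X →ₗ[R] Y} {p : Y →ₗ[R] Z} (hs : SES i p)
    (hY : Module.Flat R Y) (hZ : Module.Flat R Z) : Module.Flat R X := by
  rw [Module.Flat.iff_rTensor_preserves_injective_linearMap]
  intro N N' _ _ _ _ φ hφ
  have h1 := LinearMap.lTensor_injective_of_exact_of_flat p hs.surj i hs.inj hs.ex N
  have h2 := Module.Flat.rTensor_preserves_injective_linearMap (M := Y) φ hφ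
  have h3 : Function.Injective (i.lTensor N' ∘ₗ φ.rTensor X) := by
    rw [LinearMap.lTensor_comp_rTensor, ← LinearMap.rTensor_comp_lTensor]
    exact h2.comp h1
  exact Function.Injective.of_comp (f := i.lTensor N') h3

theorem flat_ext {X Y Z : ModuleCat.{0} R} {i : X →ₗ[R] Y} {p : Y →ₗ[R] Z} (hs : SES i p)
    (hX : Module.Flat R X) (hZ : Module.Flat R Z) : Module.Flat R Y := by
  rw [Module.Flat.iff_rTensor_preserves_injective_linearMap]
  intro N N' _ _ _ _ φ hφ
  have h1 := LinearMap.lTensor_injective_of_exact_of_flat p hs.surj i hs.inj hs.ex N'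
  have hx := Module.Flat.rTensor_preserves_injective_linearMap (M := X) φ hφ
  have hz := Module.Flat.rTensor_preserves_injective_linearMap (M := Z) φ hφ
  rw [injective_iff_map_eq_zero]
  intro t ht
  have c1 : ∀ t, φ.rTensor Z (p.lTensor N t) = p.lTensor N' (φ.rTensor Y t) := by
    intro t
    rw [← LinearMap.comp_apply, ← LinearMap.comp_apply, LinearMap.lTensor_comp_rTensor,
      LinearMap.rTensor_comp_lTensor]
  have c2 : ∀ t, φ.rTensor Y (i.lTensor N t) = i.lTensor N' (φ.rTensor X t) := by
    intro t
    rw [← LinearMap.comp_apply, ← LinearMap.comp_apply, LinearMap.lTensor_comp_rTensor,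
      LinearMap.rTensor_comp_lTensor]
  have e1 : p.lTensor N t = 0 := hz (by rw [c1, ht, map_zero, map_zero])
  obtain ⟨s, rfl⟩ := (lTensor_exact N hs.ex hs.surj t).1 e1
  have e2 : s = 0 := hx (h1 (by rw [← c2, ht, map_zero, map_zero]))
  rw [e2, map_zero]

section main

variable (G F : ModuleCat.{0} R → Prop)

/-- Data of the two compatible complete hereditary cotorsion pairs. -/
structure Setup : Prop where
  gext : ∀ {X Y Z : ModuleCat.{0} R} {i : X →ₗ[R] Y} {p : Y →ₗ[R] Z}, SES i p → G X → G Z → G Y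
  gker : ∀ {X Y Z : ModuleCat.{0} R} {i : X →ₗ[R] Y} {p : Y →ₗ[R] Z}, SES i p → G Y → G Z → G X
  fext : ∀ {X Y Z : ModuleCat.{0} R} {i : X →ₗ[R] Y} {p : Y →ₗ[R] Z}, SES i p → F X → F Z → F Y
  fker : ∀ {X Y Z : ModuleCat.{0} R} {i : X →ₗ[R] Y} {p : Y →ₗ[R] Z}, SES i p → F Y → F Z → F X
  ffree : ∀ M : ModuleCat.{0} R, Module.Free R M → F M
  gpre : ∀ M : ModuleCat.{0} R, ∃ (K A : ModuleCat.{0} R) (i : K →ₗ[R] A) (p : A →ₗ[R] M),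
    SES i p ∧ G A ∧ Perp G K
  fenv : ∀ M : ModuleCat.{0} R, ∃ (K A : ModuleCat.{0} R) (i : M →ₗ[R] K) (p : K →ₗ[R] A),
    SES i p ∧ Perp F K ∧ F A
  fg : ∀ M, F M → G M
  core : ∀ M, (G M ∧ Perp G M) ↔ (F M ∧ Perp F M)

def W (X : ModuleCat.{0} R) : Prop :=
  ∃ (N A : ModuleCat.{0} R) (i : X →ₗ[R] N) (p : N →ₗ[R] A), SES i p ∧ Perp G N ∧ F A

def W2 (X : ModuleCat.{0} R) : Prop :=
  ∃ (N A : ModuleCat.{0} R) (i : N →ₗ[R] A) (p : A →ₗ[R] X), SES i p ∧ Perp G N ∧ F A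

variable {G F}

namespace Setup

variable (S : Setup G F)
include S

theorem perp_le {M : ModuleCat.{0} R} (h : Perp G M) : Perp F M := fun A hA => h A (S.fg A hA)

theorem gcok {X Y Z : ModuleCat.{0} R} {i : X →ₗ[R] Y} {p : Y →ₗ[R] Z} (hs : SES i p)
    (hX : Perp G X) (hY : Perp G Y) : Perp G Z :=
  Perp.cok (fun M hM => S.fg M (S.ffree M hM)) S.gker hs hX hY

theorem ccok {X Y Z : ModuleCat.{0} R} {i : X →ₗ[R] Y} {p : Y →ₗ[R] Z} (hs : SES i p)
    (hX : Perp F X) (hY : Perp F Y) : Perp F Z :=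
  Perp.cok S.ffree S.fker hs hX hY

theorem w_iff (X : ModuleCat.{0} R) : W G F X ↔ W2 G F X := by
  constructor
  · rintro ⟨N, A, i, p, hs, hN, hA⟩
    obtain ⟨N', G', k, g, hk, hG', hN'⟩ := S.gpre N
    have hG2 := (S.core G').1 ⟨hG', Perp.ext hk hN' hN⟩
    obtain ⟨P, s, t, r, h1, h2⟩ := comp_epi hk hs
    exact ⟨N', P, s, t, h1, hN', S.fker h2 hG2.1 hA⟩
  · rintro ⟨N, A, i, p, hs, hN, hA⟩
    obtain ⟨C, F', k, g, hk, hC, hF'⟩ := S.fenv A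
    have hC2 := (S.core C).2 ⟨S.fext hk hA hF', hC⟩
    obtain ⟨Q, r, s, t, h1, h2⟩ := comp_mono hs hk
    exact ⟨Q, F', s, t, h2, S.gcok h1 hN hC2.2, hF'⟩

theorem w_of_f {X : ModuleCat.{0} R} (h : F X) : W G F X :=
  (S.w_iff X).2 ⟨_, X, _, _, ses_zero_left X, Perp.zero, h⟩

theorem w_of_gc {X : ModuleCat.{0} R} (h : Perp G X) : W G F X :=
  ⟨X, _, _, _, ses_zero_right X, h, S.ffree _ (inferInstanceAs (Module.Free R PUnit))⟩

theorem f_of_w {X : ModuleCat.{0} R} (hG : G X) (h : W G F X) : F X := by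
  obtain ⟨N, A, i, p, hs, hN, hA⟩ := h
  exact S.fker hs ((S.core N).1 ⟨S.gext hs hG (S.fg A hA), hN⟩).1 hA

theorem gc_of_w {X : ModuleCat.{0} R} (hC : Perp F X) (h : W G F X) : Perp G X := by
  obtain ⟨N, A, i, p, hs, hN, hA⟩ := (S.w_iff X).1 h
  exact S.gcok hs hN ((S.core A).2 ⟨hA, Perp.ext hs (S.perp_le hN) hC⟩).2

theorem L1 {Y Y' A : ModuleCat.{0} R} {i : Y →ₗ[R] Y'} {p : Y' →ₗ[R] A} (hs : SES i p)
    (h : W G F Y') (hA : F A) : W G F Y := by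
  obtain ⟨N, A', j, q, hs', hN, hA'⟩ := h
  obtain ⟨Q, r, s, t, h1, h2⟩ := comp_mono hs hs'
  exact ⟨N, Q, _, _, h1, hN, S.fext h2 hA hA'⟩

theorem L2 {N Y Z : ModuleCat.{0} R} {i : N →ₗ[R] Y} {p : Y →ₗ[R] Z} (hs : SES i p)
    (hN : Perp G N) (h : W G F Y) : W G F Z := by
  obtain ⟨N', A, j, q, hs', hN', hA⟩ := (S.w_iff Y).1 h
  obtain ⟨Q, s, t, r, h1, h2⟩ := comp_epi hs' hs
  exact (S.w_iff Z).2 ⟨Q, A, _, _, h2, Perp.ext h1 hN' hN, hA⟩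

theorem L3 {N Y A : ModuleCat.{0} R} {i : N →ₗ[R] Y} {p : Y →ₗ[R] A} (hs : SES i p)
    (hN : Perp G N) (hA : F A) : W G F Y := by
  obtain ⟨D, F', j, q, hs', hD, hF'⟩ := S.fenv Y
  obtain ⟨Q, r, s, t, h1, h2⟩ := comp_mono hs hs'
  have hQ := S.ccok h1 (S.perp_le hN) hD
  have hQ' := (S.core Q).2 ⟨S.fext h2 hA hF', hQ⟩
  exact ⟨D, F', j, q, hs', Perp.ext h1 hN hQ'.2, hF'⟩

theorem wext {X Y Z : ModuleCat.{0} R} {i : X →ₗ[R] Y} {p : Y →ₗ[R] Z} (hs : SES i p)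
    (hX : W G F X) (hZ : W G F Z) : W G F Y := by
  obtain ⟨N, A, j, q, hs', hN, hA⟩ := hX
  obtain ⟨Y', a, b, hpo⟩ := exists_PO i j
  obtain ⟨p', hp', -⟩ := hpo.ses hs
  obtain ⟨q', hq', -⟩ := hpo.symm.ses hs'
  refine S.L1 hq' ?_ hA
  obtain ⟨N2, A2, j2, q2, hs2, hN2, hA2⟩ := (S.w_iff Z).1 hZ
  obtain ⟨E, u, v, hpb⟩ := exists_PB p' q2
  obtain ⟨k, hk, -⟩ := hpb.ses hp'
  obtain ⟨l, hl, -⟩ := hpb.symm.ses hs2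
  exact S.L2 hl hN2 (S.L3 hk hN hA2)

theorem wcok {X Y Z : ModuleCat.{0} R} {i : X →ₗ[R] Y} {p : Y →ₗ[R] Z} (hs : SES i p)
    (hX : W G F X) (hY : W G F Y) : W G F Z := by
  obtain ⟨N, A, j, q, hs', hN, hA⟩ := hX
  obtain ⟨Y', a, b, hpo⟩ := exists_PO i j
  obtain ⟨p', hp', -⟩ := hpo.ses hs
  obtain ⟨q', hq', -⟩ := hpo.symm.ses hs'
  exact S.L2 hp' hN (S.wext hq' hY (S.w_of_f hA))

theorem wker {X Y Z : ModuleCat.{0} R} {i : X →ₗ[R] Y} {p : Y →ₗ[R] Z} (hs : SES i p)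
    (hY : W G F Y) (hZ : W G F Z) : W G F X := by
  obtain ⟨N, A, j, q, hs', hN, hA⟩ := (S.w_iff Z).1 hZ
  obtain ⟨E, u, v, hpb⟩ := exists_PB p q
  obtain ⟨k, hk, -⟩ := hpb.ses hs
  obtain ⟨l, hl, -⟩ := hpb.symm.ses hs'
  exact S.L1 hk (S.wext hl (S.w_of_gc hN) hY) hA

theorem wretract {X Y : ModuleCat.{0} R} (i : X →ₗ[R] Y) (r : Y →ₗ[R] X)
    (hr : ∀ x, r (i x) = x) (hY : W G F Y) : W G F X := by
  obtain ⟨C1, F1, j, q, hs, hC1, hF1⟩ := S.fenv X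
  obtain ⟨Y', a, b, hpo⟩ := exists_PO i j
  obtain ⟨q', hq', -⟩ := hpo.symm.ses hs
  have hY' := S.wext hq' hY (S.w_of_f hF1)
  obtain ⟨ρ, -, hρ⟩ := hpo.desc C1 (j ∘ₗ r) LinearMap.id (fun x => by simp [hr])
  obtain ⟨C2, F2, j2, q2, hs2, hC2, hF2⟩ := S.fenv Y'
  have hC2' := S.gc_of_w hC2 (S.wext hs2 hY' (S.w_of_f hF2))
  obtain ⟨σ, hσ⟩ := Ext1.extend (hC1 F2 hF2) hs2 ρ
  refine ⟨C1, F1, j, q, hs, Perp.retract (j2 ∘ₗ b) σ (fun x => ?_) hC2', hF1⟩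
  rw [LinearMap.comp_apply, hσ, hρ]; rfl

end Setup

end main

end HT

/- STATEMENT 18: Let `B` be a class making `GF_B(R)` closed under extensions, so that
`(GF_B(R), GC_B(R))` and `(F(R), C(R))` are complete (hereditary) cotorsion pairs with
`F(R) ⊆ GF_B(R)`, `GC_B(R) ⊆ C(R)` and `GF_B(R) ∩ GC_B(R) = F(R) ∩ C(R)`. Then there exists a
unique thick class `W` such that `GF_B(R) ∩ W = F(R)` and `C(R) ∩ W = GC_B(R)` (Gillespie's
two-cotorsion-pair theorem, giving the Gorenstein `B`-flat Hovey triple). -/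

theorem exists_unique_thick_class_gorensteinBFlat_hovey_triple
    (R : Type) [CommRing R] (B : ModuleCat R → Prop)
    -- `GF_B(R)` is closed under extensions
    (hext : ∀ (X Y Z : ModuleCat.{0} R) (i : X →ₗ[R] Y) (p : Y →ₗ[R] Z),
      Function.Injective i → Function.Exact i p → Function.Surjective p →
      GorensteinBFlat R B X → GorensteinBFlat R B Z → GorensteinBFlat R B Y)
    -- both classes are closed under kernels of epimorphisms (heredity)
    (hher : ∀ (X Y Z : ModuleCat.{0} R) (i : X →ₗ[R] Y) (p : Y →ₗ[R] Z),
      Function.Injective i → Function.Exact i p → Function.Surjective p →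
      GorensteinBFlat R B Y → GorensteinBFlat R B Z → GorensteinBFlat R B X)
    -- completeness of `(GF_B(R), GC_B(R))`: special precovers and preenvelopes
    (hcomp₁ : ∀ M : ModuleCat.{0} R,
      (∃ (K A₀ : ModuleCat.{0} R) (i : K →ₗ[R] A₀) (p : A₀ →ₗ[R] M),
        Function.Injective i ∧ Function.Exact i p ∧ Function.Surjective p ∧
        GorensteinBFlat R B A₀ ∧ GBCotorsion R B K) ∧
      (∃ (K A₁ : ModuleCat.{0} R) (i : M →ₗ[R] K) (p : K →ₗ[R] A₁),
        Function.Injective i ∧ Function.Exact i p ∧ Function.Surjective p ∧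
        GBCotorsion R B K ∧ GorensteinBFlat R B A₁))
    -- completeness of `(F(R), C(R))`
    (hcomp₂ : ∀ M : ModuleCat.{0} R,
      (∃ (K A₀ : ModuleCat.{0} R) (i : K →ₗ[R] A₀) (p : A₀ →ₗ[R] M),
        Function.Injective i ∧ Function.Exact i p ∧ Function.Surjective p ∧
        Module.Flat R A₀ ∧ Cotorsion R K) ∧
      (∃ (K A₁ : ModuleCat.{0} R) (i : M →ₗ[R] K) (p : K →ₗ[R] A₁),
        Function.Injective i ∧ Function.Exact i p ∧ Function.Surjective p ∧
        Cotorsion R K ∧ Module.Flat R A₁))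
    -- the inclusions `F(R) ⊆ GF_B(R)` and `GC_B(R) ⊆ C(R)`
    (hincl₁ : ∀ M : ModuleCat.{0} R, Module.Flat R M → GorensteinBFlat R B M)
    (hincl₂ : ∀ M : ModuleCat.{0} R, GBCotorsion R B M → Cotorsion R M)
    -- the cores agree: `GF_B(R) ∩ GC_B(R) = F(R) ∩ C(R)`
    (hcore : ∀ M : ModuleCat.{0} R,
      (GorensteinBFlat R B M ∧ GBCotorsion R B M) ↔ (Module.Flat R M ∧ Cotorsion R M)) :
    ∃ W : ModuleCat.{0} R → Prop,
      (IsThickClass R W ∧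
        (∀ M, (GorensteinBFlat R B M ∧ W M) ↔ Module.Flat R M) ∧
        (∀ M, (Cotorsion R M ∧ W M) ↔ GBCotorsion R B M)) ∧
      ∀ W' : ModuleCat.{0} R → Prop,
        (IsThickClass R W' ∧
          (∀ M, (GorensteinBFlat R B M ∧ W' M) ↔ Module.Flat R M) ∧
          (∀ M, (Cotorsion R M ∧ W' M) ↔ GBCotorsion R B M)) →
        ∀ M, W' M ↔ W M := by
  have S : HT.Setup (GorensteinBFlat R B) (fun M : ModuleCat.{0} R => Module.Flat R M) := by
    refine ⟨?_, ?_, ?_, ?_, ?_, ?_, ?_, hincl₁, hcore⟩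
    · intro X Y Z i p h; exact hext X Y Z i p h.inj h.ex h.surj
    · intro X Y Z i p h; exact hher X Y Z i p h.inj h.ex h.surj
    · intro X Y Z i p h; exact HT.flat_ext h
    · intro X Y Z i p h; exact HT.flat_ker h
    · intro M hM; exact inferInstance
    · intro M
      obtain ⟨K, A, i, p, h1, h2, h3, h4, h5⟩ := (hcomp₁ M).1
      exact ⟨K, A, i, p, ⟨h1, h2, h3⟩, h4, h5⟩
    · intro M
      obtain ⟨K, A, i, p, h1, h2, h3, h4, h5⟩ := (hcomp₂ M).2
      exact ⟨K, A, i, p, ⟨h1, h2, h3⟩, h4, h5⟩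
  refine ⟨HT.W (GorensteinBFlat R B) (fun M : ModuleCat.{0} R => Module.Flat R M),
    ⟨⟨?_, ?_, ?_, ?_⟩, ?_, ?_⟩, ?_⟩
  · intro X Y i r h
    exact S.wretract i r (fun x => congrArg (fun f => f x) h)
  · intro X Y Z i p h1 h2 h3; exact S.wext ⟨h1, h2, h3⟩
  · intro X Y Z i p h1 h2 h3; exact S.wker ⟨h1, h2, h3⟩
  · intro X Y Z i p h1 h2 h3; exact S.wcok ⟨h1, h2, h3⟩
  · intro M
    exact ⟨fun h => S.f_of_w h.1 h.2, fun h => ⟨hincl₁ M h, S.w_of_f h⟩⟩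
  · intro M
    exact ⟨fun h => S.gc_of_w h.1 h.2, fun h => ⟨hincl₂ M h, S.w_of_gc h⟩⟩
  · rintro W' ⟨⟨-, we, wk, -⟩, hf, hc⟩ M
    constructor
    · intro hM
      obtain ⟨C, A, i, p, h1, h2, h3, h4, h5⟩ := (hcomp₂ M).2
      have hC := (hc C).1 ⟨h4, we M C A i p h1 h2 h3 hM ((hf A).2 h5).2⟩
      exact ⟨C, A, i, p, ⟨h1, h2, h3⟩, hC, h5⟩
    · rintro ⟨N, A, i, p, h, hN, hA⟩
      exact wk M N A i p h.inj h.ex h.surj ((hc N).2 hN).2 ((hf A).2 hA).2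
end

section
/- If a class B of right R-modules makes GF_B(R) closed under extensions, then the right orthogonal class PGF_B(R)^⊥ is thick: it is closed under direct summands, extensions, cokernels of monomorphisms, and kernels of epimorphisms between its members. -/
open LinearMap

/-- `M` is projectively coresolved Gorenstein `B`-flat if it is the zeroth cycle module
`Z₀ = ker (P₀ → P₋₁)` of an exact complex of projective modules which stays exact after
applying `N ⊗_R -` for every `N` in the class `B`. -/
def PGFBFlat (R : Type) [CommRing R] (B : ModuleCat R → Prop) (M : ModuleCat R) : Prop :=
  ∃ (P : ℤ → ModuleCat.{0} R) (d : ∀ n : ℤ, P (n + 1) →ₗ[R] P n),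
    (∀ n : ℤ, Module.Projective R (P n)) ∧
    (∀ n : ℤ, d n ∘ₗ d (n + 1) = 0) ∧
    (∀ n : ℤ, Function.Exact (d (n + 1)) (d n)) ∧
    (∀ N : ModuleCat R, B N → ∀ n : ℤ,
      Function.Exact (lTensor N (d (n + 1))) (lTensor N (d n))) ∧
    Nonempty (M ≃ₗ[R] LinearMap.ker (d (-1)))

/- STATEMENT 19: If a class `B` of (right) `R`-modules containing the injective modules makes
`GF_B(R)` closed under extensions, then the right orthogonal class `PGF_B(R)^⊥` is thick: it is
closed under direct summands, extensions, cokernels of monomorphisms and kernels of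
epimorphisms between its members. -/

section Helpers

variable {R : Type} [CommRing R]

theorem lift_inj {A X Y Z : Type} [AddCommGroup A] [AddCommGroup X] [AddCommGroup Y]
    [AddCommGroup Z] [Module R A] [Module R X] [Module R Y] [Module R Z]
    (i : X →ₗ[R] Y) (p : Y →ₗ[R] Z) (hi : Function.Injective i) (hip : Function.Exact i p)
    (f : A →ₗ[R] Y) (hf : ∀ a, p (f a) = 0) : ∃ f' : A →ₗ[R] X, ∀ a, i (f' a) = f a := by
  have h : ∀ a, f a ∈ LinearMap.range i := fun a => (hip _).1 (hf a)
  refine ⟨(LinearEquiv.ofInjective i hi).symm.toLinearMap ∘ₗ f.codRestrict _ h, fun a => ?_⟩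
  have := LinearEquiv.apply_symm_apply (LinearEquiv.ofInjective i hi) (f.codRestrict _ h a)
  simpa using congrArg Subtype.val this

theorem desc_surj {A X Y Z : Type} [AddCommGroup A] [AddCommGroup X] [AddCommGroup Y]
    [AddCommGroup Z] [Module R A] [Module R X] [Module R Y] [Module R Z]
    (i : X →ₗ[R] Y) (p : Y →ₗ[R] Z) (hp : Function.Surjective p) (hip : Function.Exact i p)
    (f : Y →ₗ[R] A) (hf : ∀ x, f (i x) = 0) : ∃ f' : Z →ₗ[R] A, ∀ y, f' (p y) = f y := by
  have h : LinearMap.ker p ≤ LinearMap.ker f := by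
    intro y hy
    obtain ⟨x, rfl⟩ := (hip y).1 hy
    exact hf x
  refine ⟨(LinearMap.ker p).liftQ f h ∘ₗ (p.quotKerEquivOfSurjective hp).symm.toLinearMap,
    fun y => ?_⟩
  have : (p.quotKerEquivOfSurjective hp).symm (p y) = Submodule.Quotient.mk y := by
    rw [LinearEquiv.symm_apply_eq]; rfl
  simp [this]

theorem lift_proj {A Y Z : Type} [AddCommGroup A] [AddCommGroup Y]
    [AddCommGroup Z] [Module R A] [Module R Y] [Module R Z] [Module.Projective R A]
    (p : Y →ₗ[R] Z) (hp : Function.Surjective p)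
    (f : A →ₗ[R] Z) : ∃ f' : A →ₗ[R] Y, ∀ a, p (f' a) = f a := by
  obtain ⟨h, hh⟩ := Module.projective_lifting_property p f hp
  exact ⟨h, fun a => by rw [← hh]; rfl⟩

theorem ext_to {A2 A1 A0 : ModuleCat.{0} R} {L X : ModuleCat.{0} R}
    (d2 : A2 →ₗ[R] A1) (d1 : A1 →ₗ[R] A0) (q : A0 →ₗ[R] L)
    (h21 : Function.Exact d2 d1) (h1 : Function.Exact d1 q) (hq : Function.Surjective q)
    (h : Ext1Vanishes R L X) (g : A1 →ₗ[R] X) (hg : ∀ a, g (d2 a) = 0) :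
    ∃ W : A0 →ₗ[R] X, ∀ a, W (d1 a) = g a := by
  let S : Submodule R (X × A0) := LinearMap.range (LinearMap.prod g (-d1))
  let i : X →ₗ[R] (X × A0) ⧸ S := S.mkQ ∘ₗ LinearMap.inl R X A0
  let j : A0 →ₗ[R] (X × A0) ⧸ S := S.mkQ ∘ₗ LinearMap.inr R X A0
  have hS : S ≤ LinearMap.ker (q ∘ₗ LinearMap.snd R X A0) := by
    rintro _ ⟨y, rfl⟩
    simp [h1.apply_apply_eq_zero]
  let p : ((X × A0) ⧸ S) →ₗ[R] L := S.liftQ (q ∘ₗ LinearMap.snd R X A0) hS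
  have hji : ∀ y, j (d1 y) = i (g y) := by
    intro y
    refine ((Submodule.Quotient.eq S).2 ⟨-y, ?_⟩)
    simp
  have hdec : ∀ x a, (Submodule.Quotient.mk (x, a) : (X × A0) ⧸ S) = i x + j a := by
    intro x a
    simp [i, j, ← Submodule.Quotient.mk_add]
  have hpj : ∀ a, p (j a) = q a := fun a => by simp [p, j]
  have hpi : ∀ a, p (i a) = 0 := fun a => by simp [p, i]
  have hi : Function.Injective i := by
    rw [injective_iff_map_eq_zero]
    intro x hx
    obtain ⟨y, hy⟩ := (Submodule.Quotient.mk_eq_zero S).1 hx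
    have hy1 : g y = x := congrArg Prod.fst hy
    have hy2 : -(d1 y) = 0 := congrArg Prod.snd hy
    obtain ⟨z, rfl⟩ := (h21 y).1 (neg_eq_zero.1 hy2)
    rw [← hy1, hg]
  have hex : Function.Exact i p := by
    intro e
    constructor
    · intro he
      obtain ⟨⟨x, a⟩, rfl⟩ := Submodule.Quotient.mk_surjective S e
      rw [hdec, map_add, hpi, hpj, zero_add] at he
      obtain ⟨y, rfl⟩ := (h1 a).1 he
      exact ⟨x + g y, by rw [hdec, hji, map_add]⟩
    · rintro ⟨x, rfl⟩
      exact hpi x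
  have hp : Function.Surjective p := by
    intro l
    obtain ⟨a, rfl⟩ := hq l
    exact ⟨j a, hpj a⟩
  obtain ⟨s, hs⟩ := h (ModuleCat.of R ((X × A0) ⧸ S)) i p hi hex hp
  have hs' : ∀ l, p (s l) = l := fun l => LinearMap.congr_fun hs l
  obtain ⟨W, hW⟩ := lift_inj i p hi hex (j - s ∘ₗ q) (fun a => by
    simp only [LinearMap.sub_apply, LinearMap.comp_apply, map_sub]
    rw [hpj]
    exact sub_eq_zero.2 (hs' _).symm)
  refine ⟨W, fun a => hi ?_⟩
  rw [hW]
  simp only [LinearMap.sub_apply, LinearMap.comp_apply, h1.apply_apply_eq_zero, map_zero, hji]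
  exact sub_zero _

theorem ext_of {A2 A1 A0 : ModuleCat.{0} R} {L X : ModuleCat.{0} R}
    (d2 : A2 →ₗ[R] A1) (d1 : A1 →ₗ[R] A0) (q : A0 →ₗ[R] L) [Module.Projective R A0]
    (h21 : Function.Exact d2 d1) (h1 : Function.Exact d1 q) (hq : Function.Surjective q)
    (h : ∀ g : A1 →ₗ[R] X, (∀ a, g (d2 a) = 0) → ∃ W : A0 →ₗ[R] X, ∀ a, W (d1 a) = g a) :
    Ext1Vanishes R L X := by
  intro E i p hi hip hp
  obtain ⟨a, ha⟩ := lift_proj p hp q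
  obtain ⟨b, hb⟩ := lift_inj i p hi hip (a ∘ₗ d1) (fun y => by
    simp [ha, h1.apply_apply_eq_zero])
  obtain ⟨W, hW⟩ := h b (fun z => hi (by simp [hb, h21.apply_apply_eq_zero]))
  obtain ⟨s, hs⟩ := desc_surj d1 q hq h1 (a - i ∘ₗ W) (fun y => by simp [hW, hb])
  refine ⟨s, LinearMap.ext fun l => ?_⟩
  obtain ⟨y, rfl⟩ := hq l
  simp [hs, ha, hip.apply_apply_eq_zero]

/-- differential with free indices -/
def dd (P : ℤ → ModuleCat.{0} R) (d : ∀ n : ℤ, P (n + 1) →ₗ[R] P n) (a b : ℤ) (h : a = b + 1) :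
    P a →ₗ[R] P b := by
  subst h
  exact d b

theorem pgf_ker (B : ModuleCat R → Prop) (P : ℤ → ModuleCat.{0} R)
    (d : ∀ n : ℤ, P (n + 1) →ₗ[R] P n)
    (h1 : ∀ n : ℤ, Module.Projective R (P n))
    (h2 : ∀ n : ℤ, d n ∘ₗ d (n + 1) = 0)
    (h3 : ∀ n : ℤ, Function.Exact (d (n + 1)) (d n))
    (h4 : ∀ N : ModuleCat R, B N → ∀ n : ℤ,
      Function.Exact (lTensor N (d (n + 1))) (lTensor N (d n))) (n : ℤ) :
    PGFBFlat R B (ModuleCat.of R (LinearMap.ker (d n))) := by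
  have k2 : ∀ a b c h h', dd P d b c h' ∘ₗ dd P d a b h = 0 := by
    intro a b c h h'; subst h'; subst h; exact h2 c
  have k3 : ∀ a b c h h', Function.Exact (dd P d a b h) (dd P d b c h') := by
    intro a b c h h'; subst h'; subst h; exact h3 c
  have k4 : ∀ N : ModuleCat R, B N → ∀ a b c h h',
      Function.Exact (lTensor N (dd P d a b h)) (lTensor N (dd P d b c h')) := by
    intro N hN a b c h h'; subst h'; subst h; exact h4 N hN c
  have k5 : ∀ a b h, b = n → Nonempty (LinearMap.ker (d n) ≃ₗ[R] LinearMap.ker (dd P d a b h)) := by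
    intro a b h hb; subst hb; subst h; exact ⟨LinearEquiv.refl _ _⟩
  exact ⟨fun m => P (m + (n + 1)),
    fun m => dd P d (m + 1 + (n + 1)) (m + (n + 1)) (by ring),
    fun m => h1 _, fun m => k2 _ _ _ _ _, fun m => k3 _ _ _ _ _,
    fun N hN m => k4 N hN _ _ _ _ _, k5 _ _ _ (by ring)⟩

/-- Acyclicity of the Hom complex -/
def HomAc (P : ℤ → ModuleCat.{0} R) (d : ∀ n : ℤ, P (n + 1) →ₗ[R] P n) (X : ModuleCat.{0} R) :
    Prop :=
  ∀ (n : ℤ) (g : P (n + 1) →ₗ[R] X), (∀ a, g (d (n + 1) a) = 0) →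
    ∃ W : P n →ₗ[R] X, ∀ a, W (d n a) = g a

/-- restriction of the differential to cycles -/
def qq (P : ℤ → ModuleCat.{0} R) (d : ∀ n : ℤ, P (n + 1) →ₗ[R] P n)
    (h3 : ∀ n : ℤ, Function.Exact (d (n + 1)) (d n)) (n : ℤ) :
    P (n + 1 + 1) →ₗ[R] LinearMap.ker (d n) :=
  (d (n + 1)).codRestrict _ (fun a => (h3 n).apply_apply_eq_zero a)

theorem qq_surj (P : ℤ → ModuleCat.{0} R) (d : ∀ n : ℤ, P (n + 1) →ₗ[R] P n)
    (h3 : ∀ n : ℤ, Function.Exact (d (n + 1)) (d n)) (n : ℤ) :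
    Function.Surjective (qq P d h3 n) := by
  rintro ⟨x, hx⟩
  obtain ⟨y, rfl⟩ := (h3 n x).1 hx
  exact ⟨y, rfl⟩

theorem qq_exact (P : ℤ → ModuleCat.{0} R) (d : ∀ n : ℤ, P (n + 1) →ₗ[R] P n)
    (h3 : ∀ n : ℤ, Function.Exact (d (n + 1)) (d n)) (n : ℤ) :
    Function.Exact (d (n + 1 + 1)) (qq P d h3 n) := by
  intro y
  rw [← h3 (n + 1) y]
  exact Subtype.ext_iff

/-- Reduction of membership in the orthogonal class to Hom-acyclicity. -/
theorem perp_iff (B : ModuleCat R → Prop) (X : ModuleCat.{0} R) :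
    (∀ L, PGFBFlat R B L → Ext1Vanishes R L X) ↔
    ∀ (P : ℤ → ModuleCat.{0} R) (d : ∀ n : ℤ, P (n + 1) →ₗ[R] P n),
    (∀ n : ℤ, Module.Projective R (P n)) →
    (∀ n : ℤ, d n ∘ₗ d (n + 1) = 0) →
    (∀ n : ℤ, Function.Exact (d (n + 1)) (d n)) →
    (∀ N : ModuleCat R, B N → ∀ n : ℤ,
      Function.Exact (lTensor N (d (n + 1))) (lTensor N (d n))) → HomAc P d X := by
  constructor
  · intro h P d h1 h2 h3 h4 n g hg
    obtain ⟨m, rfl⟩ : ∃ m : ℤ, n = m + 1 + 1 := ⟨n - 2, by ring⟩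
    exact ext_to (L := ModuleCat.of R (LinearMap.ker (d m))) (d (m + 1 + 1 + 1)) (d (m + 1 + 1))
      (qq P d h3 m) (h3 _) (qq_exact P d h3 m) (qq_surj P d h3 m)
      (h _ (pgf_ker B P d h1 h2 h3 h4 m)) g hg
  · rintro h L ⟨P, d, h1, h2, h3, h4, ⟨e⟩⟩
    have hH := h P d h1 h2 h3 h4
    haveI := h1 (-1 + 1 + 1)
    refine ext_of (d (-1 + 1 + 1 + 1)) (d (-1 + 1 + 1)) (e.symm.toLinearMap ∘ₗ qq P d h3 (-1))
      (h3 _) ?_ ?_ (hH _)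
    · intro y
      rw [← qq_exact P d h3 (-1) y]
      simp
    · exact e.symm.surjective.comp (qq_surj P d h3 (-1))

end Helpers

theorem pgf_perp_is_thick
    (R : Type) [CommRing R] (B : ModuleCat R → Prop)
    (hBinj : ∀ N : ModuleCat R, Module.Injective R N → B N)
    (hext : ∀ (X Y Z : ModuleCat.{0} R) (i : X →ₗ[R] Y) (p : Y →ₗ[R] Z),
      Function.Injective i → Function.Exact i p → Function.Surjective p →
      GorensteinBFlat R B X → GorensteinBFlat R B Z → GorensteinBFlat R B Y) :
    -- `PGF_B(R)^⊥` is closed under direct summands (retracts) ...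
    (∀ (X Y : ModuleCat.{0} R) (i : X →ₗ[R] Y) (r : Y →ₗ[R] X),
      r ∘ₗ i = LinearMap.id →
      (∀ L, PGFBFlat R B L → Ext1Vanishes R L Y) →
      (∀ L, PGFBFlat R B L → Ext1Vanishes R L X)) ∧
    -- ... under extensions ...
    (∀ (X Y Z : ModuleCat.{0} R) (i : X →ₗ[R] Y) (p : Y →ₗ[R] Z),
      Function.Injective i → Function.Exact i p → Function.Surjective p →
      (∀ L, PGFBFlat R B L → Ext1Vanishes R L X) →
      (∀ L, PGFBFlat R B L → Ext1Vanishes R L Z) →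
      (∀ L, PGFBFlat R B L → Ext1Vanishes R L Y)) ∧
    -- ... under cokernels of monomorphisms ...
    (∀ (X Y Z : ModuleCat.{0} R) (i : X →ₗ[R] Y) (p : Y →ₗ[R] Z),
      Function.Injective i → Function.Exact i p → Function.Surjective p →
      (∀ L, PGFBFlat R B L → Ext1Vanishes R L X) →
      (∀ L, PGFBFlat R B L → Ext1Vanishes R L Y) →
      (∀ L, PGFBFlat R B L → Ext1Vanishes R L Z)) ∧
    -- ... and under kernels of epimorphisms.
    (∀ (X Y Z : ModuleCat.{0} R) (i : X →ₗ[R] Y) (p : Y →ₗ[R] Z),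
      Function.Injective i → Function.Exact i p → Function.Surjective p →
      (∀ L, PGFBFlat R B L → Ext1Vanishes R L Y) →
      (∀ L, PGFBFlat R B L → Ext1Vanishes R L Z) →
      (∀ L, PGFBFlat R B L → Ext1Vanishes R L X)) := by
  simp only [perp_iff]
  refine ⟨?_, ?_, ?_, ?_⟩
  · intro X Y i r hri hY P d h1 h2 h3 h4 n g hg
    obtain ⟨W, hW⟩ := hY P d h1 h2 h3 h4 n (i ∘ₗ g) (fun a => by simp [hg])
    refine ⟨r ∘ₗ W, fun a => ?_⟩
    rw [LinearMap.comp_apply, hW]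
    exact LinearMap.congr_fun hri (g a)
  · intro X Y Z i p hi hip hp hX hZ P d h1 h2 h3 h4 n g hg
    haveI := h1 n
    obtain ⟨W, hW⟩ := hZ P d h1 h2 h3 h4 n (p ∘ₗ g) (fun a => by simp [hg])
    obtain ⟨t, ht⟩ := lift_proj p hp W
    obtain ⟨u, hu⟩ := lift_inj i p hi hip (g - t ∘ₗ d n) (fun a => by simp [ht, hW])
    obtain ⟨v, hv⟩ := hX P d h1 h2 h3 h4 n u
      (fun a => hi (by simp [hu, hg, (h3 n).apply_apply_eq_zero]))
    exact ⟨t + i ∘ₗ v, fun a => by simp [hv, hu]⟩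
  · intro X Y Z i p hi hip hp hX hY P d h1 h2 h3 h4 n g hg
    haveI := h1 (n + 1)
    obtain ⟨t, ht⟩ := lift_proj p hp g
    obtain ⟨u, hu⟩ := lift_inj i p hi hip (t ∘ₗ d (n + 1)) (fun a => by simp [ht, hg])
    obtain ⟨v, hv⟩ := hX P d h1 h2 h3 h4 (n + 1) u
      (fun a => hi (by simp [hu, (h3 (n + 1)).apply_apply_eq_zero]))
    obtain ⟨w, hw⟩ := hY P d h1 h2 h3 h4 n (t - i ∘ₗ v) (fun a => by simp [hv, hu])
    exact ⟨p ∘ₗ w, fun a => by simp [hw, ht, hip.apply_apply_eq_zero]⟩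
  · intro X Y Z i p hi hip hp hY hZ P d h1 h2 h3 h4 n g hg
    obtain ⟨m, rfl⟩ : ∃ m : ℤ, n = m + 1 := ⟨n - 1, by ring⟩
    haveI := h1 m
    obtain ⟨w, hw⟩ := hY P d h1 h2 h3 h4 (m + 1) (i ∘ₗ g) (fun a => by simp [hg])
    obtain ⟨v, hv⟩ := hZ P d h1 h2 h3 h4 m (p ∘ₗ w)
      (fun a => by simp [hw, hip.apply_apply_eq_zero])
    obtain ⟨t, ht⟩ := lift_proj p hp v
    obtain ⟨u, hu⟩ := lift_inj i p hi hip (w - t ∘ₗ d m) (fun a => by simp [ht, hv])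
    exact ⟨u, fun a => hi (by simp [hu, hw, (h3 m).apply_apply_eq_zero])⟩
end
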